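/- There exists a constant C > 0, depending only on Ω, ω₀, ω and η⁰, such that for every T > 0, every bounded measurable potential a, and every classical nonnegative solution q of the adjoint heat equation with Neumann boundary condition, one has ∫_Ω q(T/4, x) dx ≤ exp(C(1 + 1/T + T‖a‖_∞ + ‖a‖_∞^{1/2})) ∫₀^T ∫_ω q(t,x) dx dt. -/

import Mathlib

open MeasureTheory Real Set RealInnerProductSpace

noncomputable def spaceLaplacian {N : ℕ} (f : EuclideanSpace ℝ (Fin N) → ℝ)
    (x : EuclideanSpace ℝ (Fin N)) : ℝ :=
  ∑ i : Fin N, fderiv ℝ (fun y => fderiv ℝ f y (EuclideanSpace.single i 1)) x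
    (EuclideanSpace.single i 1)


/-!
Test the equation with the time-independent weight `exp (s * η)`. Where `∇ η` does not vanish, that
is, away from `ω`, its Laplacian dominates `c * s ^ 2 * exp (s * η)` for some `c > 0` and all large
`s`, and in Green's formula the boundary terms have a favourable sign, since `η` increases into `Ω`
and `q` satisfies the Neumann condition. Hence the weighted mass `∫ q * exp (s * η)` decays on
`[T / 4, 3 * T / 4]` at a rate of order `s ^ 2`, up to a source supported in `ω`. On the other hand,
testing with `1` bounds the mass at time `T / 4` by `exp (‖a‖ * T / 2)` times the mass at time
`3 * T / 4`. Together, the mass at time `T / 4` is at most a small multiple of itself plus the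
observation, as soon as the decay beats both the size `exp (s * M)` of the weight and
`exp (‖a‖ * T / 2)`; this dictates the choice `s = k * (1 + 1 / T + √‖a‖)`.

No divergence theorem on a domain with boundary is needed: the inequality `∫ div W ≤ 0` for a field
`W` pointing into `Ω` follows by integrating `div (χ * W)`, where `χ` is a cutoff along the level
sets of `η`. If `W` is only weakly inward, one perturbs it by `δ * ∇ η` and lets `δ → 0`.
-/

open Filter InnerProductSpace Laplacian
open scoped Topology Gradient

section ContinuousDerivative

variable {E F G : Type*} [NormedAddCommGroup E] [NormedSpace ℝ E] [NormedAddCommGroup F]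
  [NormedSpace ℝ F] [NormedAddCommGroup G] [NormedSpace ℝ G] {f g : E → F} {u : E → ℝ} {s t : Set E}

/-- The function `f` is of class `C¹` up to the boundary on `s`: it is differentiable in the ambient
space at every point of `s`, and its derivative is continuous on `s`. This is the regularity that
a classical solution has on the closure of its domain; unlike `ContDiffOn ℝ 1 f s`, it refers to
the full derivative `fderiv` also at the boundary points of `s`. -/
structure HasContinuousFDerivOn (f : E → F) (s : Set E) : Prop where
  differentiableAt : ∀ x ∈ s, DifferentiableAt ℝ f x
  continuousOn_fderiv : ContinuousOn (fderiv ℝ f) s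

theorem hasContinuousFDerivOn_of_contDiff (hf : ContDiff ℝ 1 f) (s : Set E) :
    HasContinuousFDerivOn f s where
  differentiableAt x _ := hf.differentiable one_ne_zero x
  continuousOn_fderiv := (hf.continuous_fderiv one_ne_zero).continuousOn

namespace HasContinuousFDerivOn

theorem continuousOn (hf : HasContinuousFDerivOn f s) : ContinuousOn f s := fun x hx =>
  (hf.differentiableAt x hx).continuousAt.continuousWithinAt

theorem mono (hf : HasContinuousFDerivOn f s) (hts : t ⊆ s) : HasContinuousFDerivOn f t :=
  ⟨fun x hx => hf.differentiableAt x (hts hx), hf.continuousOn_fderiv.mono hts⟩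

theorem contDiffOn (hf : HasContinuousFDerivOn f s) (hs : IsOpen s) : ContDiffOn ℝ 1 f s :=
  (contDiffOn_succ_iff_fderiv_of_isOpen (n := 0) hs).2
    ⟨fun x hx => (hf.differentiableAt x hx).differentiableWithinAt, by simp,
      contDiffOn_zero.2 hf.continuousOn_fderiv⟩

theorem clm_comp (hf : HasContinuousFDerivOn f s) (L : F →L[ℝ] G) :
    HasContinuousFDerivOn (fun x => L (f x)) s where
  differentiableAt x hx := L.differentiableAt.comp x (hf.differentiableAt x hx)
  continuousOn_fderiv := (continuousOn_const.clm_comp hf.continuousOn_fderiv).congr fun x hx =>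
    L.hasFDerivAt.comp x (hf.differentiableAt x hx).hasFDerivAt |>.fderiv

theorem add (hf : HasContinuousFDerivOn f s) (hg : HasContinuousFDerivOn g s) :
    HasContinuousFDerivOn (fun x => f x + g x) s where
  differentiableAt x hx := (hf.differentiableAt x hx).add (hg.differentiableAt x hx)
  continuousOn_fderiv := (hf.continuousOn_fderiv.add hg.continuousOn_fderiv).congr fun x hx =>
    fderiv_fun_add (hf.differentiableAt x hx) (hg.differentiableAt x hx)

theorem sub (hf : HasContinuousFDerivOn f s) (hg : HasContinuousFDerivOn g s) :
    HasContinuousFDerivOn (fun x => f x - g x) s where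
  differentiableAt x hx := (hf.differentiableAt x hx).sub (hg.differentiableAt x hx)
  continuousOn_fderiv := (hf.continuousOn_fderiv.sub hg.continuousOn_fderiv).congr fun x hx =>
    fderiv_fun_sub (hf.differentiableAt x hx) (hg.differentiableAt x hx)

theorem smul (hu : HasContinuousFDerivOn u s) (hf : HasContinuousFDerivOn f s) :
    HasContinuousFDerivOn (fun x => u x • f x) s where
  differentiableAt x hx := (hu.differentiableAt x hx).smul (hf.differentiableAt x hx)
  continuousOn_fderiv := by
    have hcont : ContinuousOn
        (fun x => u x • fderiv ℝ f x + (fderiv ℝ u x).smulRight (f x)) s :=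
      (hu.continuousOn.smul hf.continuousOn_fderiv).add
        ((ContinuousLinearMap.smulRightL ℝ E F).isBoundedBilinearMap.continuous.comp_continuousOn
          (hu.continuousOn_fderiv.prodMk hf.continuousOn))
    exact hcont.congr fun x hx =>
      fderiv_fun_smul (hu.differentiableAt x hx) (hf.differentiableAt x hx)

end HasContinuousFDerivOn

end ContinuousDerivative

section Divergence

variable {E F : Type*} [NormedAddCommGroup E] [NormedSpace ℝ E] [FiniteDimensional ℝ E]
  [NormedAddCommGroup F] [NormedSpace ℝ F] {V W : E → E} {x : E}

variable (E) in
/-- The trace of endomorphisms of a finite-dimensional space, as a continuous linear form. -/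
noncomputable def traceCLM : (E →L[ℝ] E) →L[ℝ] ℝ :=
  LinearMap.toContinuousLinearMap (LinearMap.trace ℝ E ∘ₗ ContinuousLinearMap.coeLM ℝ)

/-- The divergence of a vector field, defined without coordinates as the trace of its derivative;
it takes the value `0` where the field is not differentiable. -/
noncomputable def divergence (W : E → E) (x : E) : ℝ :=
  traceCLM E (fderiv ℝ W x)

theorem divergence_add (hV : DifferentiableAt ℝ V x) (hW : DifferentiableAt ℝ W x) :
    divergence (fun y => V y + W y) x = divergence V x + divergence W x := by
  rw [divergence, fderiv_fun_add hV hW, map_add, divergence, divergence]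

theorem divergence_sub (hV : DifferentiableAt ℝ V x) (hW : DifferentiableAt ℝ W x) :
    divergence (fun y => V y - W y) x = divergence V x - divergence W x := by
  rw [divergence, fderiv_fun_sub hV hW, map_sub, divergence, divergence]

theorem divergence_smul {u : E → ℝ} (hu : DifferentiableAt ℝ u x) (hW : DifferentiableAt ℝ W x) :
    divergence (fun y => u y • W y) x = u x * divergence W x + fderiv ℝ u x (W x) := by
  have htrace : traceCLM E ((fderiv ℝ u x).smulRight (W x)) = fderiv ℝ u x (W x) :=
    LinearMap.trace_smulRight (fderiv ℝ u x : E →ₗ[ℝ] ℝ) (W x)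
  rw [divergence, fderiv_fun_smul hu hW, map_add, map_smul, htrace, divergence, smul_eq_mul]

theorem continuousOn_divergence {s : Set E} (hW : HasContinuousFDerivOn W s) :
    ContinuousOn (divergence W) s :=
  (traceCLM E).continuous.comp_continuousOn hW.continuousOn_fderiv

variable [MeasurableSpace E] [BorelSpace E] {μ : Measure E} [μ.IsAddHaarMeasure]

theorem integral_fderiv_eq_zero {f : E → F} (hf : ContDiff ℝ 1 f) (hs : HasCompactSupport f) :
    ∫ x, fderiv ℝ f x ∂μ = 0 := by
  have hint : Integrable (fderiv ℝ f) μ :=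
    (hf.continuous_fderiv one_ne_zero).integrable_of_hasCompactSupport (hs.fderiv ℝ)
  ext v
  have hparts := integral_smul_fderiv_eq_neg_fderiv_smul_of_integrable (𝕜 := ℝ) (μ := μ)
    (f := fun _ => (1 : ℝ)) (g := f) (v := v) (by simp)
    (by simpa using hint.apply_continuousLinearMap v)
    (by simpa using hf.continuous.integrable_of_hasCompactSupport hs)
    (fun x _ => differentiableAt_const _) (fun x _ => hf.differentiable one_ne_zero x)
  simpa [ContinuousLinearMap.integral_apply hint] using hparts

theorem integral_divergence_eq_zero (hW : ContDiff ℝ 1 W) (hs : HasCompactSupport W) :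
    ∫ x, divergence W x ∂μ = 0 := by
  have hint : Integrable (fderiv ℝ W) μ :=
    (hW.continuous_fderiv one_ne_zero).integrable_of_hasCompactSupport (hs.fderiv ℝ)
  simp only [divergence]
  rw [(traceCLM E).integral_comp_comm hint, integral_fderiv_eq_zero hW hs, map_zero]

theorem setIntegral_divergence_eq_zero {Ω K : Set E} (hΩ : IsOpen Ω) (hK : IsCompact K)
    (hKΩ : K ⊆ Ω) (hW : ContDiffOn ℝ 1 W Ω) (hzero : ∀ x ∈ Ω \ K, W x = 0) :
    ∫ x in Ω, divergence W x ∂μ = 0 := by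
  have hvanish : ∀ x ∉ K, Ω.indicator W x = 0 := fun x hx => by
    by_cases hxΩ : x ∈ Ω
    · rw [indicator_of_mem hxΩ, hzero x ⟨hxΩ, hx⟩]
    · exact indicator_of_notMem hxΩ W
  have hsmooth : ContDiff ℝ 1 (Ω.indicator W) := by
    refine contDiff_of_contDiffOn_union_of_isOpen (s := Ω) (t := Kᶜ)
      (hW.congr fun x hx => indicator_of_mem hx W)
      (contDiffOn_const.congr hvanish) ?_ hΩ hK.isClosed.isOpen_compl
    exact eq_univ_of_forall fun x => or_iff_not_imp_right.2 fun hx => hKΩ (not_not.1 hx)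
  have hdiv : divergence (Ω.indicator W) = Ω.indicator (divergence W) := by
    ext x
    by_cases hx : x ∈ Ω
    · have hlocal : Ω.indicator W =ᶠ[𝓝 x] W := by
        filter_upwards [hΩ.mem_nhds hx] with y hy using indicator_of_mem hy W
      rw [indicator_of_mem hx, divergence, hlocal.fderiv_eq, divergence]
    · have hlocal : Ω.indicator W =ᶠ[𝓝 x] fun _ => 0 := by
        filter_upwards [hK.isClosed.isOpen_compl.mem_nhds fun h => hx (hKΩ h)] using hvanish
      rw [indicator_of_notMem hx, divergence, hlocal.fderiv_eq, fderiv_const_apply, map_zero]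
  rw [← integral_indicator hΩ.measurableSet, ← hdiv]
  exact integral_divergence_eq_zero hsmooth (HasCompactSupport.intro hK hvanish)

end Divergence

section LevelCutoff

variable {E : Type*} {Ω : Set E} {η : E → ℝ} {r : ℝ} {x : E}

/-- A smooth cutoff along the level sets of `η`: it vanishes where `η ≤ 1 / r` and equals `1` where
`η ≥ 2 / r`. When `η` is positive inside a domain and zero on its boundary, letting `r → ∞` exhausts
the domain. -/
noncomputable def levelCutoff (η : E → ℝ) (r : ℝ) (x : E) : ℝ :=
  smoothTransition (r * η x - 1)

theorem levelCutoff_eq_zero (h : r * η x ≤ 1) : levelCutoff η r x = 0 :=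
  smoothTransition.zero_of_nonpos (by linarith)

theorem levelCutoff_eq_one (h : 2 ≤ r * η x) : levelCutoff η r x = 1 :=
  smoothTransition.one_of_one_le (by linarith)

theorem tendsto_setIntegral_levelCutoff_mul [TopologicalSpace E] [MeasurableSpace E]
    [OpensMeasurableSpace E] {μ : Measure E} (hΩ : MeasurableSet Ω) (hη : Continuous η)
    (hpos : ∀ x ∈ Ω, 0 < η x) {g : E → ℝ} (hg : IntegrableOn g Ω μ) :
    Tendsto (fun r => ∫ x in Ω, levelCutoff η r x * g x ∂μ) atTop (𝓝 (∫ x in Ω, g x ∂μ)) := by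
  refine tendsto_integral_filter_of_dominated_convergence (fun x => ‖g x‖)
    (.of_forall fun r => ?_) (.of_forall fun r => .of_forall fun x => ?_) hg.norm ?_
  · have hχ : Continuous (levelCutoff η r) :=
      smoothTransition.continuous.comp ((continuous_const.mul hη).sub continuous_const)
    exact hχ.measurable.aestronglyMeasurable.mul hg.aestronglyMeasurable
  · rw [norm_mul]
    refine mul_le_of_le_one_left (norm_nonneg _) ?_
    rw [levelCutoff, norm_of_nonneg (smoothTransition.nonneg _)]
    exact smoothTransition.le_one _
  · filter_upwards [ae_restrict_mem hΩ] with x hx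
    refine tendsto_const_nhds.congr' ?_
    filter_upwards [eventually_ge_atTop (2 / η x)] with r hr
    rw [levelCutoff_eq_one ((div_le_iff₀ (hpos x hx)).1 hr), one_mul]

variable [NormedAddCommGroup E] [NormedSpace ℝ E]

theorem contDiff_levelCutoff (hη : ContDiff ℝ 1 η) (r : ℝ) : ContDiff ℝ 1 (levelCutoff η r) :=
  smoothTransition.contDiff.comp ((contDiff_const.mul hη).sub contDiff_const)

theorem fderiv_levelCutoff (hη : DifferentiableAt ℝ η x) (r : ℝ) :
    fderiv ℝ (levelCutoff η r) x = (deriv smoothTransition (r * η x - 1) * r) • fderiv ℝ η x := by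
  have hinner : HasFDerivAt (fun y => r * η y - 1) (r • fderiv ℝ η x) x :=
    (hη.hasFDerivAt.const_mul r).sub_const 1
  have houter : DifferentiableAt ℝ smoothTransition (r * η x - 1) :=
    (smoothTransition.contDiff (n := 1)).differentiable one_ne_zero _
  rw [mul_smul]
  exact (houter.hasDerivAt.comp_hasFDerivAt x hinner).fderiv

theorem fderiv_levelCutoff_apply_nonneg (hη : DifferentiableAt ℝ η x) (hr : 0 ≤ r) {v : E}
    (hv : r * η x ≤ 2 → 0 ≤ fderiv ℝ η x v) : 0 ≤ fderiv ℝ (levelCutoff η r) x v := by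
  rw [fderiv_levelCutoff hη, smul_apply, smul_eq_mul]
  rcases le_or_gt (r * η x) 2 with h | h
  · exact mul_nonneg (mul_nonneg smoothTransition.monotone.deriv_nonneg hr) (hv h)
  · have hconst : smoothTransition =ᶠ[𝓝 (r * η x - 1)] fun _ => 1 := by
      filter_upwards [lt_mem_nhds (show 1 < r * η x - 1 by linarith)] with y hy
      exact smoothTransition.one_of_one_le hy.le
    rw [hconst.deriv_eq, deriv_const, zero_mul, zero_mul]

end LevelCutoff

section OpenSets

variable {X : Type*} [TopologicalSpace X] {Ω : Set X}

theorem frontier_subset_closure_diff {ω₀ : Set X} (hΩ : IsOpen Ω) (hω₀ : closure ω₀ ⊆ Ω) :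
    frontier Ω ⊆ closure (Ω \ ω₀) := fun x hx => by
  rw [hΩ.frontier_eq] at hx
  have hmem : x ∈ closure (Ω ∩ (closure ω₀)ᶜ) :=
    isClosed_closure.isOpen_compl.closure_inter ⟨hx.1, fun h => hx.2 (hω₀ h)⟩
  exact closure_mono (sdiff_subset_sdiff_right subset_closure) hmem

theorem exists_pos_forall_pos_of_pos_on_frontier {η : X → ℝ} (hΩ : IsOpen Ω)
    (hc : IsCompact (closure Ω)) (hη : ContinuousOn η (closure Ω))
    (hpos : ∀ x ∈ Ω, 0 < η x) {G : X → ℝ} (hG : ContinuousOn G (closure Ω))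
    (hGpos : ∀ x ∈ frontier Ω, 0 < G x) :
    ∃ m > 0, ∀ x ∈ Ω, η x < m → 0 < G x := by
  have hKc : IsCompact (closure Ω ∩ G ⁻¹' Iic 0) :=
    hc.of_isClosed_subset (hG.preimage_isClosed_of_isClosed isClosed_closure isClosed_Iic)
      inter_subset_left
  have hηK : ∀ x ∈ closure Ω ∩ G ⁻¹' Iic 0, 0 < η x := fun x ⟨hx, hGx⟩ =>
    hpos x (by_contra fun hxΩ => (hGpos x (hΩ.frontier_eq ▸ ⟨hx, hxΩ⟩)).not_ge hGx)
  obtain ⟨m, hm, hle⟩ := hKc.exists_forall_le' (hη.mono inter_subset_left) hηK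
  exact ⟨m, hm, fun x hx hlt =>
    not_le.1 fun hGx => hlt.not_ge (hle x ⟨subset_closure hx, hGx⟩)⟩

theorem integrableOn_of_continuousOn_closure [MeasurableSpace X] [OpensMeasurableSpace X]
    {μ : Measure X} [IsFiniteMeasureOnCompacts μ] {F : Type*} [NormedAddCommGroup F] {f : X → F}
    (hc : IsCompact (closure Ω)) (hf : ContinuousOn f (closure Ω)) : IntegrableOn f Ω μ :=
  (hf.integrableOn_compact' hc isClosed_closure.measurableSet).mono_set subset_closure

end OpenSets

section InwardFields

variable {E : Type*} [NormedAddCommGroup E] [NormedSpace ℝ E] [FiniteDimensional ℝ E]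
  [MeasurableSpace E] [BorelSpace E] {μ : Measure E} [μ.IsAddHaarMeasure]
  {Ω : Set E} {η : E → ℝ} {W : E → E}

theorem setIntegral_levelCutoff_mul_divergence_nonpos (hΩ : IsOpen Ω) (hc : IsCompact (closure Ω))
    (hη : ContDiff ℝ 1 η) (hzero : ∀ x ∈ frontier Ω, η x = 0)
    (hW : HasContinuousFDerivOn W (closure Ω)) {r : ℝ} (hr : 0 ≤ r)
    (hin : ∀ x ∈ Ω, r * η x ≤ 2 → 0 ≤ fderiv ℝ η x (W x)) :
    ∫ x in Ω, levelCutoff η r x * divergence W x ∂μ ≤ 0 := by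
  have hχ := hasContinuousFDerivOn_of_contDiff (contDiff_levelCutoff hη r) (closure Ω)
  have hKc : IsCompact (closure Ω ∩ {x | 1 ≤ r * η x}) :=
    hc.inter_right (isClosed_le continuous_const (continuous_const.mul hη.continuous))
  have hKΩ : closure Ω ∩ {x | 1 ≤ r * η x} ⊆ Ω := fun x ⟨hx, hx1⟩ => by
    by_contra hxΩ
    have hηx := hzero x (hΩ.frontier_eq ▸ ⟨hx, hxΩ⟩)
    norm_num [hηx] at hx1
  have hdiv : ∀ x ∈ Ω, divergence (fun y => levelCutoff η r y • W y) x =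
      levelCutoff η r x * divergence W x + fderiv ℝ (levelCutoff η r) x (W x) := fun x hx =>
    divergence_smul (hχ.differentiableAt x (subset_closure hx))
      (hW.differentiableAt x (subset_closure hx))
  have htotal := setIntegral_divergence_eq_zero (μ := μ) hΩ hKc hKΩ
    (((hχ.smul hW).mono subset_closure).contDiffOn hΩ) fun x hx => by
      have hlt : r * η x ≤ 1 := le_of_not_ge fun h => hx.2 ⟨subset_closure hx.1, h⟩
      rw [levelCutoff_eq_zero hlt, zero_smul]
  have hint_div : IntegrableOn (fun x => levelCutoff η r x * divergence W x) Ω μ :=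
    integrableOn_of_continuousOn_closure hc (hχ.continuousOn.mul (continuousOn_divergence hW))
  have hint_flux : IntegrableOn (fun x => fderiv ℝ (levelCutoff η r) x (W x)) Ω μ :=
    integrableOn_of_continuousOn_closure hc (hχ.continuousOn_fderiv.clm_apply hW.continuousOn)
  rw [setIntegral_congr_fun hΩ.measurableSet hdiv, integral_add hint_div hint_flux] at htotal
  have hflux : 0 ≤ ∫ x in Ω, fderiv ℝ (levelCutoff η r) x (W x) ∂μ :=
    setIntegral_nonneg hΩ.measurableSet fun x hx =>
      fderiv_levelCutoff_apply_nonneg (hη.differentiable one_ne_zero x) hr (hin x hx)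
  linarith

theorem setIntegral_divergence_nonpos_of_fderiv_pos (hΩ : IsOpen Ω) (hc : IsCompact (closure Ω))
    (hη : ContDiff ℝ 1 η) (hpos : ∀ x ∈ Ω, 0 < η x) (hzero : ∀ x ∈ frontier Ω, η x = 0)
    (hW : HasContinuousFDerivOn W (closure Ω))
    (hin : ∀ x ∈ frontier Ω, 0 < fderiv ℝ η x (W x)) : ∫ x in Ω, divergence W x ∂μ ≤ 0 := by
  obtain ⟨m, hm, hGpos⟩ := exists_pos_forall_pos_of_pos_on_frontier hΩ hc hη.continuous.continuousOn
    hpos ((hη.continuous_fderiv one_ne_zero).continuousOn.clm_apply hW.continuousOn) hin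
  refine le_of_tendsto (tendsto_setIntegral_levelCutoff_mul hΩ.measurableSet hη.continuous hpos
    (integrableOn_of_continuousOn_closure hc (continuousOn_divergence hW))) ?_
  filter_upwards [eventually_gt_atTop (2 / m), eventually_ge_atTop 0] with r hr hr0
  refine setIntegral_levelCutoff_mul_divergence_nonpos hΩ hc hη hzero hW hr0 fun x hx hle => ?_
  exact (hGpos x hx (lt_of_mul_lt_mul_left (hle.trans_lt ((div_lt_iff₀ hm).1 hr)) hr0)).le

end InwardFields

section Gradient

variable {E : Type*} [NormedAddCommGroup E] [InnerProductSpace ℝ E] [CompleteSpace E]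
  {f : E → ℝ} {s : Set E} {x : E}

variable (E) in
/-- The Riesz isomorphism from the dual of a real Hilbert space, as a linear rather than a
conjugate-linear map; by definition it sends `fderiv ℝ f x` to `∇ f x`. -/
noncomputable def rieszEquiv : StrongDual ℝ E ≃L[ℝ] E :=
  (toDual ℝ E).symm.toContinuousLinearEquiv

theorem inner_fderiv_gradient (f : E → ℝ) (x v w : E) :
    ⟪fderiv ℝ (∇ f) x v, w⟫ = fderiv ℝ (fderiv ℝ f) x v w := by
  have hcomp : fderiv ℝ (∇ f) x = (rieszEquiv E : StrongDual ℝ E →L[ℝ] E) ∘L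
      fderiv ℝ (fderiv ℝ f) x := (rieszEquiv E).comp_fderiv
  rw [hcomp]
  exact toDual_symm_apply

theorem hasContinuousFDerivOn_gradient (hf : HasContinuousFDerivOn (fderiv ℝ f) s) :
    HasContinuousFDerivOn (∇ f) s :=
  hf.clm_comp (rieszEquiv E : StrongDual ℝ E →L[ℝ] E)

theorem contDiff_gradient (hf : ContDiff ℝ 2 f) : ContDiff ℝ 1 (∇ f) :=
  (toDual ℝ E).symm.contDiff.comp (hf.fderiv_right (by norm_num))

theorem gradient_exp_mul (hf : DifferentiableAt ℝ f x) (k : ℝ) :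
    ∇ (fun y => exp (k * f y)) x = (k * exp (k * f x)) • ∇ f x := by
  have hderiv := ((hf.hasFDerivAt.const_mul k).exp).fderiv
  rw [gradient, hderiv, map_smul, map_smul, smul_smul, mul_comm, gradient]

end Gradient

section Laplacian

variable {E : Type*} [NormedAddCommGroup E] [InnerProductSpace ℝ E] [FiniteDimensional ℝ E]
  {f : E → ℝ} {x : E}

theorem divergence_gradient (f : E → ℝ) (x : E) : divergence (∇ f) x = Δ f x := by
  let b := stdOrthonormalBasis ℝ E
  have htrace : divergence (∇ f) x = ∑ i, ⟪b i, fderiv ℝ (∇ f) x (b i)⟫ :=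
    LinearMap.trace_eq_sum_inner (fderiv ℝ (∇ f) x : E →ₗ[ℝ] E) b
  rw [htrace, laplacian_eq_iteratedFDeriv_orthonormalBasis f b]
  refine Finset.sum_congr rfl fun i _ => ?_
  rw [iteratedFDeriv_two_apply, real_inner_comm, inner_fderiv_gradient]
  rfl

theorem laplacian_eq_traceCLM (f : E → ℝ) (x : E) : Δ f x =
    traceCLM E ((rieszEquiv E : StrongDual ℝ E →L[ℝ] E) ∘L fderiv ℝ (fderiv ℝ f) x) := by
  rw [← divergence_gradient, divergence]
  exact congrArg (traceCLM E) (rieszEquiv E).comp_fderiv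

theorem continuousOn_laplacian {s : Set E} (hf : HasContinuousFDerivOn (∇ f) s) :
    ContinuousOn (Δ f) s :=
  (continuousOn_divergence hf).congr fun x _ => (divergence_gradient f x).symm

theorem continuousOn_laplacian_slice {X : Type*} [TopologicalSpace X] {g : X × E → ℝ}
    {S : Set (X × E)}
    (hg : ContinuousOn (fun p => fderiv ℝ (fderiv ℝ fun z => g (p.1, z)) p.2) S) :
    ContinuousOn (fun p => Δ (fun z => g (p.1, z)) p.2) S := by
  simp only [laplacian_eq_traceCLM]
  exact (traceCLM E).continuous.comp_continuousOn (continuousOn_const.clm_comp hg)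

theorem laplacian_exp_mul (hf : ContDiff ℝ 2 f) (k : ℝ) (x : E) :
    Δ (fun y => exp (k * f y)) x =
      (k ^ 2 * ‖∇ f x‖ ^ 2 + k * Δ f x) * exp (k * f x) := by
  have hdiff : Differentiable ℝ f := hf.differentiable two_ne_zero
  have hgrad : ∇ (fun y => exp (k * f y)) = fun y => (k * exp (k * f y)) • ∇ f y :=
    funext fun y => gradient_exp_mul (hdiff y) k
  have hfderiv : HasFDerivAt (fun y => k * exp (k * f y))
      (k • exp (k * f x) • k • fderiv ℝ f x) x :=
    ((hdiff x).hasFDerivAt.const_mul k).exp.const_mul k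
  rw [← divergence_gradient, hgrad, divergence_smul hfderiv.differentiableAt
    ((contDiff_gradient hf).differentiable one_ne_zero x), divergence_gradient, hfderiv.fderiv]
  simp only [smul_apply, smul_eq_mul]
  rw [← inner_gradient_left, real_inner_self_eq_norm_sq]
  ring

theorem spaceLaplacian_eq_laplacian {N : ℕ} {f : EuclideanSpace ℝ (Fin N) → ℝ}
    {x : EuclideanSpace ℝ (Fin N)} (hf : DifferentiableAt ℝ (fderiv ℝ f) x) :
    spaceLaplacian f x = Δ f x := by
  rw [laplacian_eq_iteratedFDeriv_orthonormalBasis f (EuclideanSpace.basisFun (Fin N) ℝ)]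
  refine Finset.sum_congr rfl fun i _ => ?_
  rw [iteratedFDeriv_two_apply, fderiv_clm_apply hf (differentiableAt_const _)]
  simp

end Laplacian

section Green

variable {E : Type*} [NormedAddCommGroup E] [InnerProductSpace ℝ E] [FiniteDimensional ℝ E]
  {Ω : Set E} {η : E → ℝ}

/-- The function `η` is a `C²` defining function of the open set `Ω`: it is positive inside `Ω`,
vanishes on the boundary and has no critical point there. Its gradient plays the role of the inward
normal, so that boundary conditions can be stated without boundary traces. -/
structure IsBoundaryDefiningFunction (Ω : Set E) (η : E → ℝ) : Prop where
  contDiff : ContDiff ℝ 2 η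
  pos : ∀ x ∈ Ω, 0 < η x
  eq_zero : ∀ x ∈ frontier Ω, η x = 0
  gradient_ne_zero : ∀ x ∈ frontier Ω, ∇ η x ≠ 0

variable [MeasurableSpace E] [BorelSpace E] {μ : Measure E} [μ.IsAddHaarMeasure]

theorem setIntegral_divergence_nonpos (hΩ : IsOpen Ω) (hc : IsCompact (closure Ω))
    (hη : IsBoundaryDefiningFunction Ω η) {W : E → E} (hW : HasContinuousFDerivOn W (closure Ω))
    (hin : ∀ x ∈ frontier Ω, 0 ≤ ⟪∇ η x, W x⟫) : ∫ x in Ω, divergence W x ∂μ ≤ 0 := by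
  have hη1 : ContDiff ℝ 1 η := hη.contDiff.of_le one_le_two
  have hconst (δ : ℝ) := hasContinuousFDerivOn_of_contDiff (E := E) (contDiff_const (c := δ))
    (closure Ω)
  have hgrad := hasContinuousFDerivOn_of_contDiff (contDiff_gradient hη.contDiff) (closure Ω)
  have hperturbed : ∀ δ > 0,
      (∫ x in Ω, divergence W x ∂μ) + δ * ∫ x in Ω, divergence (∇ η) x ∂μ ≤ 0 := fun δ hδ => by
    have hdiv : ∀ x ∈ Ω, divergence (fun y => W y + δ • ∇ η y) x =
        divergence W x + δ * divergence (∇ η) x := fun x hx => by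
      have hx' := subset_closure hx
      rw [divergence_add (hW.differentiableAt x hx')
        (((hconst δ).smul hgrad).differentiableAt x hx'),
        divergence_smul (differentiableAt_const δ) (hgrad.differentiableAt x hx')]
      simp
    rw [← integral_const_mul, ← integral_add
      (integrableOn_of_continuousOn_closure hc (continuousOn_divergence hW))
      ((integrableOn_of_continuousOn_closure hc (continuousOn_divergence hgrad)).const_mul δ),
      ← setIntegral_congr_fun hΩ.measurableSet hdiv]
    refine setIntegral_divergence_nonpos_of_fderiv_pos hΩ hc hη1 hη.pos hη.eq_zero
      (hW.add ((hconst δ).smul hgrad)) fun x hx => ?_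
    rw [← inner_gradient_left, inner_add_right, real_inner_smul_right]
    have hnorm : 0 < ⟪∇ η x, ∇ η x⟫ := real_inner_self_pos.2 (hη.gradient_ne_zero x hx)
    exact add_pos_of_nonneg_of_pos (hin x hx) (mul_pos hδ hnorm)
  have hlim : Tendsto
      (fun δ => (∫ x in Ω, divergence W x ∂μ) + δ * ∫ x in Ω, divergence (∇ η) x ∂μ)
      (𝓝[>] 0) (𝓝 ((∫ x in Ω, divergence W x ∂μ) + 0 * ∫ x in Ω, divergence (∇ η) x ∂μ)) :=
    ((continuous_const.add (continuous_id.mul continuous_const)).tendsto 0).mono_left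
      nhdsWithin_le_nhds
  simpa using le_of_tendsto hlim (eventually_mem_nhdsWithin.mono hperturbed)

theorem setIntegral_mul_laplacian_le (hΩ : IsOpen Ω) (hc : IsCompact (closure Ω))
    (hη : IsBoundaryDefiningFunction Ω η) {f w : E → ℝ}
    (hf : HasContinuousFDerivOn f (closure Ω)) (hf' : HasContinuousFDerivOn (∇ f) (closure Ω))
    (hw : HasContinuousFDerivOn w (closure Ω)) (hw' : HasContinuousFDerivOn (∇ w) (closure Ω))
    (hflux : ∀ x ∈ frontier Ω, w x * ⟪∇ η x, ∇ f x⟫ ≤ f x * ⟪∇ η x, ∇ w x⟫) :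
    ∫ x in Ω, f x * Δ w x ∂μ ≤ ∫ x in Ω, w x * Δ f x ∂μ := by
  have hdiv : ∀ x ∈ Ω, divergence (fun y => f y • ∇ w y - w y • ∇ f y) x =
      f x * Δ w x - w x * Δ f x := fun x hx => by
    have hx' := subset_closure hx
    rw [divergence_sub ((hf.smul hw').differentiableAt x hx')
      ((hw.smul hf').differentiableAt x hx'),
      divergence_smul (hf.differentiableAt x hx') (hw'.differentiableAt x hx'),
      divergence_smul (hw.differentiableAt x hx') (hf'.differentiableAt x hx'),
      divergence_gradient, divergence_gradient, ← inner_gradient_left, ← inner_gradient_left,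
      real_inner_comm]
    ring
  have hint {u v : E → ℝ} (hu : HasContinuousFDerivOn u (closure Ω))
      (hv : HasContinuousFDerivOn (∇ v) (closure Ω)) :
      IntegrableOn (fun x => u x * Δ v x) Ω μ :=
    integrableOn_of_continuousOn_closure hc (hu.continuousOn.mul (continuousOn_laplacian hv))
  rw [← sub_nonpos, ← integral_sub (hint hf hw') (hint hw hf'),
    ← setIntegral_congr_fun hΩ.measurableSet hdiv]
  refine setIntegral_divergence_nonpos hΩ hc hη ((hf.smul hw').sub (hw.smul hf')) fun x hx => ?_
  rw [inner_sub_right, real_inner_smul_right, real_inner_smul_right]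
  exact sub_nonneg.2 (hflux x hx)

end Green

section ParametricIntegral

theorem continuousOn_slice {X Y Z : Type*} [TopologicalSpace X] [TopologicalSpace Y]
    [TopologicalSpace Z] {f : X × Y → Z}
    {s : Set X} {u : Set Y} (hf : ContinuousOn f (s ×ˢ u)) {x : X} (hx : x ∈ s) :
    ContinuousOn (fun y => f (x, y)) u :=
  hf.comp (by fun_prop) fun _ hy => ⟨hx, hy⟩

variable {X : Type*} [TopologicalSpace X] [MeasurableSpace X] [OpensMeasurableSpace X]
  {μ : Measure X} [IsFiniteMeasureOnCompacts μ] {Ω : Set X} {F F' : ℝ × X → ℝ} {I : Set ℝ} {t : ℝ}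

theorem hasDerivAt_setIntegral (hΩ : MeasurableSet Ω) (hc : IsCompact (closure Ω)) (hI : IsOpen I)
    (hF : ContinuousOn F (I ×ˢ closure Ω)) (hF' : ContinuousOn F' (I ×ˢ closure Ω))
    (hderiv : ∀ p ∈ I ×ˢ closure Ω, HasDerivAt (fun τ => F (τ, p.2)) (F' p) p.1) (ht : t ∈ I) :
    HasDerivAt (fun τ => ∫ x in Ω, F (τ, x) ∂μ) (∫ x in Ω, F' (t, x) ∂μ) t := by
  obtain ⟨ε, hε, hεI⟩ := Metric.nhds_basis_closedBall.mem_iff.1 (hI.mem_nhds ht)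
  obtain ⟨B, hB⟩ := ((isCompact_closedBall t ε).prod hc).exists_bound_of_continuousOn
    (hF'.mono (prod_mono_left hεI))
  have hint (τ : ℝ) (hτ : τ ∈ I) : IntegrableOn (fun x => F (τ, x)) Ω μ :=
    integrableOn_of_continuousOn_closure hc (continuousOn_slice hF hτ)
  refine (hasDerivAt_integral_of_dominated_loc_of_deriv_le (bound := fun _ => B)
    (F := fun τ x => F (τ, x)) (F' := fun τ x => F' (τ, x)) (μ := μ.restrict Ω)
    (Metric.closedBall_mem_nhds t hε) ?_ (hint t ht)
    (integrableOn_of_continuousOn_closure hc (continuousOn_slice hF' ht)).aestronglyMeasurable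
    ?_ (integrableOn_of_continuousOn_closure hc continuousOn_const) ?_).2
  · filter_upwards [hI.mem_nhds ht] with τ hτ using (hint τ hτ).aestronglyMeasurable
  · filter_upwards [ae_restrict_mem hΩ] with x hx τ hτ using hB (τ, x) ⟨hτ, subset_closure hx⟩
  · filter_upwards [ae_restrict_mem hΩ] with x hx τ hτ using
      hderiv (τ, x) ⟨hεI hτ, subset_closure hx⟩

theorem continuousOn_setIntegral (hΩ : MeasurableSet Ω) (hc : IsCompact (closure Ω))
    (hI : IsCompact I) (hF : ContinuousOn F (I ×ˢ closure Ω)) :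
    ContinuousOn (fun τ => ∫ x in Ω, F (τ, x) ∂μ) I := by
  obtain ⟨B, hB⟩ := (hI.prod hc).exists_bound_of_continuousOn hF
  refine continuousOn_of_dominated (bound := fun _ => B) (fun τ hτ => ?_) (fun τ hτ => ?_)
    (integrableOn_of_continuousOn_closure hc continuousOn_const) ?_
  · exact (integrableOn_of_continuousOn_closure hc (continuousOn_slice hF hτ)).aestronglyMeasurable
  · filter_upwards [ae_restrict_mem hΩ] with x hx using hB (τ, x) ⟨hτ, subset_closure hx⟩
  · filter_upwards [ae_restrict_mem hΩ] with x hx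
    exact hF.comp (by fun_prop) fun τ hτ => ⟨hτ, subset_closure hx⟩

end ParametricIntegral

section EssentialSupremum

theorem abs_le_eLpNorm_top_mul_of_eq_mul {X : Type*} [TopologicalSpace X] [MeasurableSpace X]
    [OpensMeasurableSpace X] {μ : Measure X} [μ.IsOpenPosMeasure] {S : Set X} (hS : IsOpen S)
    {a q g : X → ℝ} (ha : eLpNorm a ⊤ (μ.restrict S) ≠ ⊤) (hq : ContinuousOn q S)
    (hg : ContinuousOn g S) (hq0 : ∀ p ∈ S, 0 ≤ q p) (hgaq : ∀ p ∈ S, g p = a p * q p) :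
    ∀ p ∈ S, |g p| ≤ (eLpNorm a ⊤ (μ.restrict S)).toReal * q p := by
  set A := (eLpNorm a ⊤ (μ.restrict S)).toReal with hA
  have hbound : ∀ᵐ p ∂μ.restrict S, |a p| ≤ A := by
    rw [eLpNorm_exponent_top] at ha hA
    filter_upwards [ae_le_eLpNormEssSup (f := a) (μ := μ.restrict S)] with p hp
    simpa [hA] using ENNReal.toReal_mono ha hp
  have hmax : (fun p => max |g p| (A * q p)) =ᵐ[μ.restrict S] fun p => A * q p := by
    filter_upwards [hbound, ae_restrict_mem hS.measurableSet] with p hp hpS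
    rw [hgaq p hpS, abs_mul, abs_of_nonneg (hq0 p hpS)]
    exact max_eq_right (mul_le_mul_of_nonneg_right hp (hq0 p hpS))
  have hAq : ContinuousOn (fun p => A * q p) S := continuousOn_const.mul hq
  exact fun p hp => max_eq_right_iff.1 (Measure.eqOn_open_of_ae_eq hmax hS (hg.abs.sup hAq) hAq hp)

end EssentialSupremum

section Gronwall

theorem le_exp_neg_mul_add_integral {u u' f : ℝ → ℝ} {a b m : ℝ} (hab : a ≤ b) (hm : 0 ≤ m)
    (hu : ∀ t ∈ Icc a b, HasDerivAt u (u' t) t) (hf : ContinuousOn f (Icc a b))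
    (hf0 : ∀ t ∈ Icc a b, 0 ≤ f t) (hle : ∀ t ∈ Icc a b, u' t ≤ -(m * u t) + f t) :
    u b ≤ exp (-(m * (b - a))) * u a + ∫ t in a..b, f t := by
  have hderiv : ∀ t ∈ Icc a b, HasDerivAt (fun t => exp (m * (t - b)) * u t)
      (exp (m * (t - b)) * (m * u t + u' t)) t := fun t ht => by
    have hexp : HasDerivAt (fun t => exp (m * (t - b))) (exp (m * (t - b)) * m) t := by
      simpa using (((hasDerivAt_id t).sub_const b).const_mul m).exp
    exact (hexp.mul (hu t ht)).congr_deriv (by ring)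
  have hint := intervalIntegral.sub_le_integral_of_hasDeriv_right_of_le hab
    (fun t ht => (hderiv t ht).continuousAt.continuousWithinAt)
    (fun t ht => (hderiv t (Ioo_subset_Icc_self ht)).hasDerivWithinAt)
    hf.integrableOn_Icc fun t ht => by
      have htI := Ioo_subset_Icc_self ht
      have hexp_le : exp (m * (t - b)) ≤ 1 :=
        exp_le_one_iff.2 (mul_nonpos_of_nonneg_of_nonpos hm (by linarith [ht.2]))
      calc exp (m * (t - b)) * (m * u t + u' t) ≤ exp (m * (t - b)) * f t := by
            gcongr
            linarith [hle t htI]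
        _ ≤ f t := mul_le_of_le_one_left (hf0 t htI) hexp_le
  have hrate : m * (a - b) = -(m * (b - a)) := by ring
  simp only [sub_self, mul_zero, exp_zero, one_mul, hrate] at hint
  linarith

end Gronwall

section Parameters

/-- The parameter `s` of the weight `exp (s * η)` for time horizon `T` and potential bound `A`: the
term `1 / T` makes `s ^ 2 * T` dominate `s`, and the term `√A` makes `s ^ 2` dominate `A`. -/
noncomputable def carlemanParameter (k T A : ℝ) : ℝ :=
  k * (1 + 1 / T + √A)

theorem le_carlemanParameter {k T : ℝ} (hk : 0 ≤ k) (hT : 0 < T) (A : ℝ) :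
    k ≤ carlemanParameter k T A :=
  le_mul_of_one_le_right hk (by linarith [sqrt_nonneg A, one_div_pos.2 hT])

theorem le_carlemanParameter_mul {k T : ℝ} (hk : 0 ≤ k) (hT : 0 < T) (A : ℝ) :
    k ≤ carlemanParameter k T A * T := by
  have hexpand : carlemanParameter k T A * T = k * (1 + T + √A * T) := by
    rw [carlemanParameter]
    field_simp
    ring
  rw [hexpand]
  exact le_mul_of_one_le_right hk (by nlinarith [sqrt_nonneg A])

theorem mul_le_carlemanParameter_sq {k T A : ℝ} (hk : 1 ≤ k) (hT : 0 < T) (hA : 0 ≤ A) :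
    k * A ≤ carlemanParameter k T A ^ 2 := by
  have hle : k * √A ≤ carlemanParameter k T A :=
    mul_le_mul_of_nonneg_left (by linarith [one_div_pos.2 hT]) (by positivity)
  calc k * A ≤ k * (k * A) := le_mul_of_one_le_left (by positivity) hk
    _ = (k * √A) ^ 2 := by rw [mul_pow, sq_sqrt hA]; ring
    _ ≤ carlemanParameter k T A ^ 2 := by gcongr

theorem exists_carlemanParameter {c D M : ℝ} (hc : 0 < c) (hD : 0 ≤ D) (hM : 0 ≤ M) :
    ∃ k > 0, ∀ T > 0, ∀ A ≥ 0, ∀ s, s = carlemanParameter k T A →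
      A + c * s ^ 2 / 2 ≤ c * s ^ 2 - D * s - A ∧ 4 * (s * M + 1) ≤ c * s ^ 2 * T := by
  obtain ⟨k, hk1, hck⟩ : ∃ k, 1 ≤ k ∧ 4 * (D + M + 3) ≤ c * k := by
    refine ⟨1 + 4 * (D + M + 3) / c, le_add_of_nonneg_right (by positivity), ?_⟩
    have hexpand : c * (1 + 4 * (D + M + 3) / c) = c + 4 * (D + M + 3) := by field_simp
    linarith
  have hk0 : 0 < k := by linarith
  refine ⟨k, hk0, fun T hT A hA s hs => ?_⟩
  have hks : k ≤ s := hs ▸ le_carlemanParameter hk0.le hT A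
  have hcs : 4 * (D + M + 3) ≤ c * s := hck.trans (by gcongr)
  have hcsT : 4 * (D + M + 3) ≤ c * (s * T) :=
    hck.trans (by gcongr; exact hs ▸ le_carlemanParameter_mul hk0.le hT A)
  have hcA : 4 * (D + M + 3) * A ≤ c * s ^ 2 := by
    calc 4 * (D + M + 3) * A ≤ c * k * A := by gcongr
      _ = c * (k * A) := by ring
      _ ≤ c * s ^ 2 := by gcongr; exact hs ▸ mul_le_carlemanParameter_sq hk1 hT hA
  constructor
  · nlinarith [mul_nonneg hD hA, mul_nonneg hM hA]
  · nlinarith [mul_nonneg hD hM]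

theorem le_two_mul_of_le_mul_add {x p r y : ℝ} (hx : 0 ≤ x) (h : x ≤ p * (r * x + y))
    (hpr : p * r ≤ 1 / 2) : x ≤ 2 * (p * y) := by
  nlinarith [mul_le_mul_of_nonneg_right hpr hx]

theorem two_mul_mul_sq_le_exp {c s : ℝ} (hs : 0 ≤ s) :
    2 * (c * s ^ 2) ≤ exp (2 * c + 2 * s) := by
  have hc : 2 * c ≤ exp (2 * c) := (lt_add_one _).le.trans (add_one_le_exp _)
  have hs_exp : s ≤ exp s := (lt_add_one _).le.trans (add_one_le_exp _)
  calc 2 * (c * s ^ 2) = 2 * c * s ^ 2 := by ring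
    _ ≤ exp (2 * c) * exp s ^ 2 := by gcongr
    _ = exp (2 * c + 2 * s) := by rw [← exp_nat_mul, ← exp_add]; norm_num

theorem carleman_exponent_le {c k M A T : ℝ} (hc : 0 ≤ c) (hk : 0 ≤ k) (hM : 0 ≤ M) (hA : 0 ≤ A)
    (hT : 0 < T) : 2 * c + (2 + M) * carlemanParameter k T A + A * T / 2 ≤
      (2 * c + k * (2 + M) + 1) * (1 + 1 / T + T * A + √A) := by
  have hTA : 0 ≤ T * A := by positivity
  have hsum : 0 ≤ 1 / T + √A := by positivity
  have hkM : 0 ≤ k * (2 + M) := by positivity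
  rw [carlemanParameter]
  nlinarith [mul_nonneg hkM hTA, mul_nonneg hc hTA, mul_nonneg hc hsum]

end Parameters

section CarlemanWeight

variable {E : Type*} [NormedAddCommGroup E] [InnerProductSpace ℝ E] [FiniteDimensional ℝ E]
  {Ω ω : Set E} {η : E → ℝ} {c D M s : ℝ}

/-- The exponentials `exp (s * η)`, `s ≥ 0`, are Carleman weights on `Ω` with observation region
`ω`: the boundary defining function `η` has no critical point in `Ω` outside `ω`. The constants
quantify this: `c` bounds `‖∇ η‖ ^ 2` from below, and `D`, `M` bound `-Δ η` and `η` from above. -/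
structure IsCarlemanWeight (Ω ω : Set E) (η : E → ℝ) (c D M : ℝ) : Prop
    extends IsBoundaryDefiningFunction Ω η where
  lower_bound_pos : 0 < c
  laplacian_bound_nonneg : 0 ≤ D
  upper_bound_nonneg : 0 ≤ M
  le_norm_gradient_sq : ∀ x ∈ Ω \ ω, c ≤ ‖∇ η x‖ ^ 2
  neg_le_laplacian : ∀ x ∈ Ω, -D ≤ Δ η x
  le_upper_bound : ∀ x ∈ Ω, η x ≤ M

theorem IsBoundaryDefiningFunction.exists_isCarlemanWeight (hη : IsBoundaryDefiningFunction Ω η)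
    (hc : IsCompact (closure Ω)) (hcrit : ∀ x ∈ closure (Ω \ ω), ∇ η x ≠ 0) :
    ∃ c D M, IsCarlemanWeight Ω ω η c D M := by
  have hgrad : Continuous (∇ η) := (contDiff_gradient hη.contDiff).continuous
  obtain ⟨c, hcpos, hcle⟩ := (hc.of_isClosed_subset isClosed_closure
    (closure_mono sdiff_subset)).exists_forall_le' (hgrad.norm.pow 2).continuousOn
    fun x hx => pow_pos (norm_pos_iff.2 (hcrit x hx)) 2
  obtain ⟨D, hD⟩ := hc.exists_bound_of_continuousOn (continuousOn_laplacian
    (hasContinuousFDerivOn_of_contDiff (contDiff_gradient hη.contDiff) (closure Ω)))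
  obtain ⟨M, hM⟩ := hc.exists_bound_of_continuousOn hη.contDiff.continuous.continuousOn
  exact ⟨c, |D|, |M|, hη, hcpos, abs_nonneg D, abs_nonneg M,
    fun x hx => hcle x (subset_closure hx),
    fun x hx => (abs_le.1 ((hD x (subset_closure hx)).trans (le_abs_self D))).1,
    fun x hx => (abs_le.1 ((hM x (subset_closure hx)).trans (le_abs_self M))).2⟩

namespace IsCarlemanWeight

theorem continuous_exp_mul (hη : IsCarlemanWeight Ω ω η c D M) (s : ℝ) :
    Continuous fun x => exp (s * η x) :=
  (continuous_const.mul hη.contDiff.continuous).rexp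

theorem one_le_exp_mul (hη : IsCarlemanWeight Ω ω η c D M) (hs : 0 ≤ s) {x : E} (hx : x ∈ Ω) :
    1 ≤ exp (s * η x) :=
  one_le_exp (mul_nonneg hs (hη.pos x hx).le)

theorem exp_mul_le (hη : IsCarlemanWeight Ω ω η c D M) (hs : 0 ≤ s) {x : E} (hx : x ∈ Ω) :
    exp (s * η x) ≤ exp (s * M) :=
  exp_le_exp.2 (mul_le_mul_of_nonneg_left (hη.le_upper_bound x hx) hs)

theorem mul_exp_le_laplacian_exp_add_indicator (hη : IsCarlemanWeight Ω ω η c D M) (hs : 0 ≤ s)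
    {x : E} (hx : x ∈ Ω) : (c * s ^ 2 - D * s) * exp (s * η x) ≤
      Δ (fun y => exp (s * η y)) x + ω.indicator (fun _ => c * s ^ 2 * exp (s * M)) x := by
  have hlap : s * -D ≤ s * Δ η x := mul_le_mul_of_nonneg_left (hη.neg_le_laplacian x hx) hs
  have hgap : c * s ^ 2 * exp (s * η x) ≤ s ^ 2 * ‖∇ η x‖ ^ 2 * exp (s * η x) +
      ω.indicator (fun _ => c * s ^ 2 * exp (s * M)) x := by
    by_cases hxω : x ∈ ω
    · rw [indicator_of_mem hxω]
      have hexp : c * s ^ 2 * exp (s * η x) ≤ c * s ^ 2 * exp (s * M) :=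
        mul_le_mul_of_nonneg_left (hη.exp_mul_le hs hx)
          (mul_nonneg hη.lower_bound_pos.le (sq_nonneg s))
      exact hexp.trans (le_add_of_nonneg_left (by positivity))
    · rw [indicator_of_notMem hxω, add_zero, mul_comm c]
      gcongr
      exact hη.le_norm_gradient_sq x ⟨hx, hxω⟩
  rw [laplacian_exp_mul hη.contDiff]
  nlinarith [mul_le_mul_of_nonneg_right hlap (exp_pos (s * η x)).le]

variable [MeasurableSpace E] [BorelSpace E] {μ : Measure E} [IsFiniteMeasureOnCompacts μ]

theorem mul_setIntegral_mul_exp_le (hη : IsCarlemanWeight Ω ω η c D M) (hΩ : IsOpen Ω)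
    (hc : IsCompact (closure Ω)) (hω : MeasurableSet ω) (hωΩ : ω ⊆ Ω) (hs : 0 ≤ s) {f : E → ℝ}
    (hf : ContinuousOn f (closure Ω)) (hf0 : ∀ x ∈ Ω, 0 ≤ f x) :
    (c * s ^ 2 - D * s) * ∫ x in Ω, f x * exp (s * η x) ∂μ ≤
      (∫ x in Ω, f x * Δ (fun y => exp (s * η y)) x ∂μ) +
        c * s ^ 2 * exp (s * M) * ∫ x in ω, f x ∂μ := by
  have hexp : ContDiff ℝ 2 fun x => exp (s * η x) := (contDiff_const.mul hη.contDiff).exp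
  have hint_exp : IntegrableOn (fun x => f x * exp (s * η x)) Ω μ :=
    integrableOn_of_continuousOn_closure hc (hf.mul (hη.continuous_exp_mul s).continuousOn)
  have hint_lap : IntegrableOn (fun x => f x * Δ (fun y => exp (s * η y)) x) Ω μ :=
    integrableOn_of_continuousOn_closure hc (hf.mul (continuousOn_laplacian
      (hasContinuousFDerivOn_of_contDiff (contDiff_gradient hexp) _)))
  have hint_obs : IntegrableOn (ω.indicator fun x => c * s ^ 2 * exp (s * M) * f x) Ω μ :=
    ((integrableOn_of_continuousOn_closure hc hf).const_mul _).indicator hω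
  have hobs : c * s ^ 2 * exp (s * M) * ∫ x in ω, f x ∂μ =
      ∫ x in Ω, ω.indicator (fun x => c * s ^ 2 * exp (s * M) * f x) x ∂μ := by
    rw [setIntegral_indicator hω, inter_eq_right.2 hωΩ, integral_const_mul]
  rw [hobs, ← integral_const_mul, ← integral_add hint_lap hint_obs]
  refine setIntegral_mono_on (hint_exp.const_mul _) (hint_lap.add hint_obs) hΩ.measurableSet
    fun x hx => ?_
  calc (c * s ^ 2 - D * s) * (f x * exp (s * η x))
      = f x * ((c * s ^ 2 - D * s) * exp (s * η x)) := by ring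
    _ ≤ f x * (Δ (fun y => exp (s * η y)) x +
          ω.indicator (fun _ => c * s ^ 2 * exp (s * M)) x) :=
        mul_le_mul_of_nonneg_left (hη.mul_exp_le_laplacian_exp_add_indicator hs hx) (hf0 x hx)
    _ = f x * Δ (fun y => exp (s * η y)) x +
          ω.indicator (fun x => c * s ^ 2 * exp (s * M) * f x) x := by
        rw [mul_add, indicator_mul_left ω (fun _ => c * s ^ 2 * exp (s * M)) f,
          mul_comm (f x) (ω.indicator _ x)]

end IsCarlemanWeight

end CarlemanWeight

section AdjointHeatEquation

variable {E : Type*} [NormedAddCommGroup E] [InnerProductSpace ℝ E] [FiniteDimensional ℝ E]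
  {Ω ω : Set E} {η w : E → ℝ} {c D M T A s t a b : ℝ} {q qt : ℝ × E → ℝ} {x : E}

/-- The function `q`, with time derivative `qt`, is a classical nonnegative solution on `Ω` of an
adjoint heat equation with Neumann boundary condition and potential bounded by `A`. The equation
`-∂ₜ q - Δ q + a q = 0` enters only through the inequality `|∂ₜ q + Δ q| ≤ A q`, and the
gradient of the boundary defining function `η` serves as normal vector. -/
structure IsNeumannAdjointSolution (Ω : Set E) (η : E → ℝ) (T A : ℝ) (q qt : ℝ × E → ℝ) :
    Prop where
  continuousOn : ContinuousOn q (Icc 0 T ×ˢ closure Ω)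
  nonneg : ∀ p ∈ Icc 0 T ×ˢ closure Ω, 0 ≤ q p
  hasDerivAt : ∀ p ∈ Ioo 0 T ×ˢ closure Ω, HasDerivAt (fun τ => q (τ, p.2)) (qt p) p.1
  continuousOn_deriv : ContinuousOn qt (Ioo 0 T ×ˢ closure Ω)
  hasContinuousFDerivOn : ∀ t ∈ Ioo 0 T, HasContinuousFDerivOn (fun x => q (t, x)) (closure Ω)
  hasContinuousFDerivOn_gradient :
    ∀ t ∈ Ioo 0 T, HasContinuousFDerivOn (∇ fun x => q (t, x)) (closure Ω)
  abs_deriv_add_laplacian_le :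
    ∀ t ∈ Ioo 0 T, ∀ x ∈ Ω, |qt (t, x) + Δ (fun z => q (t, z)) x| ≤ A * q (t, x)
  inner_gradient_eq_zero :
    ∀ t ∈ Ioo 0 T, ∀ x ∈ frontier Ω, ⟪∇ η x, ∇ (fun z => q (t, z)) x⟫ = 0

namespace IsNeumannAdjointSolution

theorem nonneg_of_mem (hq : IsNeumannAdjointSolution Ω η T A q qt) (ht : t ∈ Icc 0 T)
    (hx : x ∈ Ω) : 0 ≤ q (t, x) :=
  hq.nonneg (t, x) ⟨ht, subset_closure hx⟩

variable [MeasurableSpace E] {μ : Measure E}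

theorem setIntegral_nonneg_of_subset (hq : IsNeumannAdjointSolution Ω η T A q qt)
    (hω : MeasurableSet ω) (hωΩ : ω ⊆ Ω) (ht : t ∈ Icc 0 T) : 0 ≤ ∫ x in ω, q (t, x) ∂μ :=
  setIntegral_nonneg hω fun _ hx => hq.nonneg_of_mem ht (hωΩ hx)

variable [BorelSpace E]

theorem of_potential {a : ℝ × E → ℝ} {ν : Measure (ℝ × E)} [ν.IsOpenPosMeasure] (hΩ : IsOpen Ω)
    (ha : eLpNorm a ⊤ (ν.restrict (Ioo 0 T ×ˢ Ω)) ≠ ⊤)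
    (hq : ContinuousOn q (Icc 0 T ×ˢ closure Ω)) (hq0 : ∀ p ∈ Icc 0 T ×ˢ closure Ω, 0 ≤ q p)
    (hderiv : ∀ p ∈ Ioo 0 T ×ˢ closure Ω, HasDerivAt (fun τ => q (τ, p.2)) (qt p) p.1)
    (hqt : ContinuousOn qt (Ioo 0 T ×ˢ closure Ω))
    (hfderiv : ∀ t ∈ Ioo 0 T, HasContinuousFDerivOn (fun x => q (t, x)) (closure Ω))
    (hdiff : ∀ p ∈ Ioo 0 T ×ˢ closure Ω,
      DifferentiableAt ℝ (fderiv ℝ fun z => q (p.1, z)) p.2)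
    (hcont : ContinuousOn (fun p => fderiv ℝ (fderiv ℝ fun z => q (p.1, z)) p.2)
      (Ioo 0 T ×ˢ closure Ω))
    (heq : ∀ t ∈ Ioo 0 T, ∀ x ∈ Ω,
      -qt (t, x) - Δ (fun z => q (t, z)) x + a (t, x) * q (t, x) = 0)
    (hneumann : ∀ t ∈ Ioo 0 T, ∀ x ∈ frontier Ω, ⟪∇ (fun z => q (t, z)) x, ∇ η x⟫ = 0) :
    IsNeumannAdjointSolution Ω η T (eLpNorm a ⊤ (ν.restrict (Ioo 0 T ×ˢ Ω))).toReal q qt where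
  continuousOn := hq
  nonneg := hq0
  hasDerivAt := hderiv
  continuousOn_deriv := hqt
  hasContinuousFDerivOn := hfderiv
  hasContinuousFDerivOn_gradient t ht := _root_.hasContinuousFDerivOn_gradient
    ⟨fun x hx => hdiff (t, x) ⟨ht, hx⟩, continuousOn_slice hcont ht⟩
  abs_deriv_add_laplacian_le t ht x hx := by
    refine abs_le_eLpNorm_top_mul_of_eq_mul (g := fun p => qt p + Δ (fun z => q (p.1, z)) p.2)
      (isOpen_Ioo.prod hΩ) ha (hq.mono (prod_mono Ioo_subset_Icc_self subset_closure))
      ((hqt.add (continuousOn_laplacian_slice hcont)).mono (prod_mono_right subset_closure))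
      (fun p hp => hq0 p ⟨Ioo_subset_Icc_self hp.1, subset_closure hp.2⟩) (fun p hp => ?_)
      (t, x) ⟨ht, hx⟩
    linarith [heq p.1 hp.1 p.2 hp.2]
  inner_gradient_eq_zero t ht x hx := by rw [real_inner_comm, hneumann t ht x hx]

section FiniteOnCompacts

variable [IsFiniteMeasureOnCompacts μ]

theorem integrableOn_mul (hq : IsNeumannAdjointSolution Ω η T A q qt)
    (hc : IsCompact (closure Ω)) (hw : Continuous w) (ht : t ∈ Icc 0 T) :
    IntegrableOn (fun x => q (t, x) * w x) Ω μ :=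
  integrableOn_of_continuousOn_closure hc
    ((continuousOn_slice hq.continuousOn ht).mul hw.continuousOn)

theorem hasDerivAt_setIntegral_mul (hq : IsNeumannAdjointSolution Ω η T A q qt) (hΩ : IsOpen Ω)
    (hc : IsCompact (closure Ω)) (hw : Continuous w) (ht : t ∈ Ioo 0 T) :
    HasDerivAt (fun τ => ∫ x in Ω, q (τ, x) * w x ∂μ) (∫ x in Ω, qt (t, x) * w x ∂μ) t := by
  have hw' : Continuous fun p : ℝ × E => w p.2 := hw.comp continuous_snd
  have hcont : ContinuousOn q (Ioo 0 T ×ˢ closure Ω) :=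
    hq.continuousOn.mono (prod_mono_left Ioo_subset_Icc_self)
  exact hasDerivAt_setIntegral (F := fun p => q p * w p.2) (F' := fun p => qt p * w p.2)
    hΩ.measurableSet hc isOpen_Ioo (hcont.mul hw'.continuousOn)
    (hq.continuousOn_deriv.mul hw'.continuousOn)
    (fun p hp => (hq.hasDerivAt p hp).mul_const (w p.2)) ht

theorem continuousOn_observation (hq : IsNeumannAdjointSolution Ω η T A q qt)
    (hc : IsCompact (closure Ω)) (hω : MeasurableSet ω) (hωΩ : ω ⊆ Ω) :
    ContinuousOn (fun t => ∫ x in ω, q (t, x) ∂μ) (Icc 0 T) :=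
  continuousOn_setIntegral hω
    (hc.of_isClosed_subset isClosed_closure (closure_mono hωΩ)) isCompact_Icc
    (hq.continuousOn.mono (prod_mono_right (closure_mono hωΩ)))

theorem intervalIntegral_observation_le (hq : IsNeumannAdjointSolution Ω η T A q qt)
    (hc : IsCompact (closure Ω)) (hω : MeasurableSet ω) (hωΩ : ω ⊆ Ω) (hab : a ≤ b)
    (hsub : Icc a b ⊆ Ioo 0 T) :
    ∫ t in a..b, ∫ x in ω, q (t, x) ∂μ ≤ ∫ t in Ioo 0 T, ∫ x in ω, q (t, x) ∂μ := by
  rw [intervalIntegral.integral_of_le hab]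
  refine setIntegral_mono_set
    ((hq.continuousOn_observation hc hω hωΩ).integrableOn_Icc.mono_set Ioo_subset_Icc_self) ?_
    (Ioc_subset_Icc_self.trans hsub).eventuallyLE
  filter_upwards [ae_restrict_mem measurableSet_Ioo] with t ht
  exact hq.setIntegral_nonneg_of_subset hω hωΩ (Ioo_subset_Icc_self ht)

theorem setIntegral_le_setIntegral_mul_exp (hq : IsNeumannAdjointSolution Ω η T A q qt)
    (hη : IsCarlemanWeight Ω ω η c D M) (hΩ : IsOpen Ω) (hc : IsCompact (closure Ω)) (hs : 0 ≤ s)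
    (ht : t ∈ Icc 0 T) : ∫ x in Ω, q (t, x) ∂μ ≤ ∫ x in Ω, q (t, x) * exp (s * η x) ∂μ :=
  setIntegral_mono_on
    (integrableOn_of_continuousOn_closure hc (continuousOn_slice hq.continuousOn ht))
    (hq.integrableOn_mul hc (hη.continuous_exp_mul s) ht) hΩ.measurableSet fun _ hx =>
    le_mul_of_one_le_right (hq.nonneg_of_mem ht hx) (hη.one_le_exp_mul hs hx)

theorem setIntegral_mul_exp_le_mul_setIntegral (hq : IsNeumannAdjointSolution Ω η T A q qt)
    (hη : IsCarlemanWeight Ω ω η c D M) (hΩ : IsOpen Ω) (hc : IsCompact (closure Ω)) (hs : 0 ≤ s)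
    (ht : t ∈ Icc 0 T) :
    ∫ x in Ω, q (t, x) * exp (s * η x) ∂μ ≤ exp (s * M) * ∫ x in Ω, q (t, x) ∂μ := by
  rw [mul_comm, ← integral_mul_const]
  exact setIntegral_mono_on (hq.integrableOn_mul hc (hη.continuous_exp_mul s) ht)
    (hq.integrableOn_mul hc continuous_const ht) hΩ.measurableSet fun _ hx =>
    mul_le_mul_of_nonneg_left (hη.exp_mul_le hs hx) (hq.nonneg_of_mem ht hx)

end FiniteOnCompacts

section Haar

variable [μ.IsAddHaarMeasure]

theorem neg_mul_setIntegral_le_setIntegral_deriv (hq : IsNeumannAdjointSolution Ω η T A q qt)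
    (hη : IsBoundaryDefiningFunction Ω η) (hΩ : IsOpen Ω) (hc : IsCompact (closure Ω))
    (ht : t ∈ Ioo 0 T) : -(A * ∫ x in Ω, q (t, x) ∂μ) ≤ ∫ x in Ω, qt (t, x) ∂μ := by
  have hflux : ∫ x in Ω, Δ (fun z => q (t, z)) x ∂μ ≤ 0 := by
    simpa only [divergence_gradient] using setIntegral_divergence_nonpos hΩ hc hη
      (hq.hasContinuousFDerivOn_gradient t ht) fun x hx => (hq.inner_gradient_eq_zero t ht x hx).ge
  have hint : IntegrableOn (fun x => q (t, x)) Ω μ :=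
    integrableOn_of_continuousOn_closure hc (hq.hasContinuousFDerivOn t ht).continuousOn
  have hint_deriv : IntegrableOn (fun x => qt (t, x)) Ω μ :=
    integrableOn_of_continuousOn_closure hc (continuousOn_slice hq.continuousOn_deriv ht)
  have hint_lap : IntegrableOn (Δ fun z => q (t, z)) Ω μ :=
    integrableOn_of_continuousOn_closure hc
      (continuousOn_laplacian (hq.hasContinuousFDerivOn_gradient t ht))
  have hmono : ∫ x in Ω, -(A * q (t, x)) ∂μ ≤
      ∫ x in Ω, (qt (t, x) + Δ (fun z => q (t, z)) x) ∂μ :=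
    setIntegral_mono_on (hint.const_mul A).neg (hint_deriv.add hint_lap) hΩ.measurableSet
      fun x hx => (abs_le.1 (hq.abs_deriv_add_laplacian_le t ht x hx)).1
  rw [integral_neg, integral_const_mul, integral_add hint_deriv hint_lap] at hmono
  linarith

theorem setIntegral_deriv_mul_exp_le (hq : IsNeumannAdjointSolution Ω η T A q qt)
    (hη : IsCarlemanWeight Ω ω η c D M) (hΩ : IsOpen Ω) (hc : IsCompact (closure Ω))
    (hω : MeasurableSet ω) (hωΩ : ω ⊆ Ω) (hs : 0 ≤ s) (ht : t ∈ Ioo 0 T) :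
    ∫ x in Ω, qt (t, x) * exp (s * η x) ∂μ ≤
      -((c * s ^ 2 - D * s - A) * ∫ x in Ω, q (t, x) * exp (s * η x) ∂μ) +
        c * s ^ 2 * exp (s * M) * ∫ x in ω, q (t, x) ∂μ := by
  have ht' := Ioo_subset_Icc_self ht
  have hexp : ContDiff ℝ 2 fun x => exp (s * η x) := (contDiff_const.mul hη.contDiff).exp
  have hgreen := setIntegral_mul_laplacian_le (μ := μ) (f := fun x => q (t, x)) hΩ hc
    hη.toIsBoundaryDefiningFunction (hq.hasContinuousFDerivOn t ht)
    (hq.hasContinuousFDerivOn_gradient t ht)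
    (hasContinuousFDerivOn_of_contDiff (hexp.of_le one_le_two) _)
    (hasContinuousFDerivOn_of_contDiff (contDiff_gradient hexp) _) fun x hx => by
      have hx0 := hq.nonneg (t, x) ⟨ht', frontier_subset_closure hx⟩
      rw [hq.inner_gradient_eq_zero t ht x hx,
        gradient_exp_mul (hη.contDiff.differentiable two_ne_zero x), real_inner_smul_right,
        real_inner_self_eq_norm_sq, mul_zero]
      exact mul_nonneg hx0 (by positivity)
  have hcarleman := hη.mul_setIntegral_mul_exp_le (μ := μ) hΩ hc hω hωΩ hs
    (continuousOn_slice hq.continuousOn ht') fun x hx => hq.nonneg_of_mem ht' hx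
  have hint := hq.integrableOn_mul (μ := μ) hc (hη.continuous_exp_mul s) ht'
  have hint_deriv : IntegrableOn (fun x => qt (t, x) * exp (s * η x)) Ω μ :=
    integrableOn_of_continuousOn_closure hc
      ((continuousOn_slice hq.continuousOn_deriv ht).mul (hη.continuous_exp_mul s).continuousOn)
  have hint_lap : IntegrableOn (fun x => exp (s * η x) * Δ (fun z => q (t, z)) x) Ω μ :=
    integrableOn_of_continuousOn_closure hc ((hη.continuous_exp_mul s).continuousOn.mul
      (continuousOn_laplacian (hq.hasContinuousFDerivOn_gradient t ht)))
  have hmono : ∫ x in Ω, (qt (t, x) * exp (s * η x) +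
      exp (s * η x) * Δ (fun z => q (t, z)) x) ∂μ ≤ ∫ x in Ω, A * (q (t, x) * exp (s * η x)) ∂μ :=
    setIntegral_mono_on (hint_deriv.add hint_lap) (hint.const_mul A) hΩ.measurableSet
      fun x hx => by
        have hle := (le_abs_self _).trans (hq.abs_deriv_add_laplacian_le t ht x hx)
        linarith [mul_le_mul_of_nonneg_right hle (exp_pos (s * η x)).le]
  rw [integral_add hint_deriv hint_lap, integral_const_mul] at hmono
  linarith

theorem setIntegral_le_exp_mul_setIntegral (hq : IsNeumannAdjointSolution Ω η T A q qt)
    (hη : IsBoundaryDefiningFunction Ω η) (hΩ : IsOpen Ω) (hc : IsCompact (closure Ω))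
    (hA : 0 ≤ A) (hab : a ≤ b) (hsub : Icc a b ⊆ Ioo 0 T) :
    ∫ x in Ω, q (a, x) ∂μ ≤ exp (A * (b - a)) * ∫ x in Ω, q (b, x) ∂μ := by
  have hderiv : ∀ t ∈ Icc a b, HasDerivAt (fun τ => -∫ x in Ω, q (τ, x) ∂μ)
      (-∫ x in Ω, qt (t, x) ∂μ) t := fun t ht => by
    simpa only [mul_one] using (hq.hasDerivAt_setIntegral_mul (μ := μ) (w := fun _ => 1) hΩ hc
      continuous_const (hsub ht)).fun_neg
  have hgronwall := le_exp_neg_mul_add_integral hab hA hderiv continuousOn_const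
    (fun _ _ => le_rfl) fun t ht => by
      linarith [hq.neg_mul_setIntegral_le_setIntegral_deriv (μ := μ) hη hΩ hc (hsub ht)]
  rw [intervalIntegral.integral_zero, add_zero, mul_neg, neg_le_neg_iff, exp_neg] at hgronwall
  exact (inv_mul_le_iff₀ (exp_pos _)).1 hgronwall

theorem setIntegral_mul_exp_le (hq : IsNeumannAdjointSolution Ω η T A q qt)
    (hη : IsCarlemanWeight Ω ω η c D M) (hΩ : IsOpen Ω) (hc : IsCompact (closure Ω))
    (hω : MeasurableSet ω) (hωΩ : ω ⊆ Ω) (hs : 0 ≤ s) (hrate : 0 ≤ c * s ^ 2 - D * s - A)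
    (hab : a ≤ b) (hsub : Icc a b ⊆ Ioo 0 T) :
    ∫ x in Ω, q (b, x) * exp (s * η x) ∂μ ≤
      exp (-((c * s ^ 2 - D * s - A) * (b - a))) * (∫ x in Ω, q (a, x) * exp (s * η x) ∂μ) +
        c * s ^ 2 * exp (s * M) * ∫ t in Ioo 0 T, ∫ x in ω, q (t, x) ∂μ := by
  have hcoeff : 0 ≤ c * s ^ 2 * exp (s * M) :=
    mul_nonneg (mul_nonneg hη.lower_bound_pos.le (sq_nonneg s)) (exp_pos _).le
  have hgronwall := le_exp_neg_mul_add_integral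
    (f := fun t => c * s ^ 2 * exp (s * M) * ∫ x in ω, q (t, x) ∂μ) hab hrate
    (fun t ht => hq.hasDerivAt_setIntegral_mul (μ := μ) hΩ hc (hη.continuous_exp_mul s) (hsub ht))
    (continuousOn_const.mul
      ((hq.continuousOn_observation hc hω hωΩ).mono (hsub.trans Ioo_subset_Icc_self)))
    (fun t ht => mul_nonneg hcoeff
      (hq.setIntegral_nonneg_of_subset hω hωΩ (Ioo_subset_Icc_self (hsub ht))))
    (fun t ht => hq.setIntegral_deriv_mul_exp_le hη hΩ hc hω hωΩ hs (hsub ht))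
  rw [intervalIntegral.integral_const_mul] at hgronwall
  exact hgronwall.trans (by gcongr; exact hq.intervalIntegral_observation_le hc hω hωΩ hab hsub)

theorem setIntegral_le_exp_mul_add (hq : IsNeumannAdjointSolution Ω η T A q qt)
    (hη : IsCarlemanWeight Ω ω η c D M) (hΩ : IsOpen Ω) (hc : IsCompact (closure Ω))
    (hω : MeasurableSet ω) (hωΩ : ω ⊆ Ω) (hA : 0 ≤ A) (hs : 0 ≤ s)
    (hrate : 0 ≤ c * s ^ 2 - D * s - A) (hab : a ≤ b) (hsub : Icc a b ⊆ Ioo 0 T) :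
    ∫ x in Ω, q (a, x) ∂μ ≤ exp (A * (b - a)) *
      (exp (-((c * s ^ 2 - D * s - A) * (b - a))) * exp (s * M) * (∫ x in Ω, q (a, x) ∂μ) +
        c * s ^ 2 * exp (s * M) * ∫ t in Ioo 0 T, ∫ x in ω, q (t, x) ∂μ) := by
  have ha := Ioo_subset_Icc_self (hsub (left_mem_Icc.2 hab))
  have hb := Ioo_subset_Icc_self (hsub (right_mem_Icc.2 hab))
  refine (hq.setIntegral_le_exp_mul_setIntegral hη.toIsBoundaryDefiningFunction hΩ hc hA hab
    hsub).trans (mul_le_mul_of_nonneg_left ?_ (exp_pos _).le)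
  refine (hq.setIntegral_le_setIntegral_mul_exp (μ := μ) hη hΩ hc hs hb).trans
    ((hq.setIntegral_mul_exp_le hη hΩ hc hω hωΩ hs hrate hab hsub).trans ?_)
  rw [mul_assoc (exp _)]
  gcongr
  exact hq.setIntegral_mul_exp_le_mul_setIntegral hη hΩ hc hs ha

end Haar

end IsNeumannAdjointSolution

end AdjointHeatEquation

section Observability

variable {E : Type*} [NormedAddCommGroup E] [InnerProductSpace ℝ E] [FiniteDimensional ℝ E]
  [MeasurableSpace E] [BorelSpace E] {μ : Measure E} [μ.IsAddHaarMeasure]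
  {Ω ω : Set E} {η : E → ℝ} {c D M T A s : ℝ} {q qt : ℝ × E → ℝ}

namespace IsNeumannAdjointSolution

theorem setIntegral_quarter_time_le (hq : IsNeumannAdjointSolution Ω η T A q qt)
    (hη : IsCarlemanWeight Ω ω η c D M) (hΩ : IsOpen Ω) (hc : IsCompact (closure Ω))
    (hω : MeasurableSet ω) (hωΩ : ω ⊆ Ω) (hT : 0 < T) (hA : 0 ≤ A) (hs : 0 ≤ s)
    (hrate : A + c * s ^ 2 / 2 ≤ c * s ^ 2 - D * s - A)
    (hdecay : 4 * (s * M + 1) ≤ c * s ^ 2 * T) :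
    ∫ x in Ω, q (T / 4, x) ∂μ ≤
      exp (2 * c + (2 + M) * s + A * T / 2) * ∫ t in Ioo 0 T, ∫ x in ω, q (t, x) ∂μ := by
  have hcs : 0 ≤ c * s ^ 2 := mul_nonneg hη.lower_bound_pos.le (sq_nonneg s)
  have hsub : Icc (T / 4) (3 * T / 4) ⊆ Ioo 0 T :=
    Icc_subset_Ioo (by positivity) (by linarith)
  have hobs : 0 ≤ ∫ t in Ioo 0 T, ∫ x in ω, q (t, x) ∂μ :=
    setIntegral_nonneg measurableSet_Ioo fun t ht =>
      hq.setIntegral_nonneg_of_subset hω hωΩ (Ioo_subset_Icc_self ht)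
  have hmass : 0 ≤ ∫ x in Ω, q (T / 4, x) ∂μ :=
    hq.setIntegral_nonneg_of_subset hΩ.measurableSet Subset.rfl ⟨by positivity, by linarith⟩
  have hhalf : exp (A * (3 * T / 4 - T / 4)) *
      (exp (-((c * s ^ 2 - D * s - A) * (3 * T / 4 - T / 4))) * exp (s * M)) ≤ 1 / 2 := by
    rw [← exp_add, ← exp_add]
    exact (exp_le_exp.2 (by nlinarith)).trans exp_neg_one_lt_half.le
  refine (le_two_mul_of_le_mul_add hmass (hq.setIntegral_le_exp_mul_add hη hΩ hc hω hωΩ hA hs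
    (by linarith) (by linarith) hsub) hhalf).trans ?_
  calc _ = 2 * (c * s ^ 2) * exp (s * M) * exp (A * T / 2) *
        ∫ t in Ioo 0 T, ∫ x in ω, q (t, x) ∂μ := by ring_nf
    _ ≤ exp (2 * c + 2 * s) * exp (s * M) * exp (A * T / 2) *
        ∫ t in Ioo 0 T, ∫ x in ω, q (t, x) ∂μ := by
      gcongr
      exact two_mul_mul_sq_le_exp hs
    _ = _ := by
      rw [← exp_add, ← exp_add]
      ring_nf

end IsNeumannAdjointSolution

theorem observability_L1_at_quarter_time_general (hΩ : IsOpen Ω) (hc : IsCompact (closure Ω))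
    (hη : IsBoundaryDefiningFunction Ω η) (hω : MeasurableSet ω) (hωΩ : ω ⊆ Ω)
    (hcrit : ∀ x ∈ closure (Ω \ ω), ∇ η x ≠ 0) :
    ∃ C > 0, ∀ T > 0, ∀ A ≥ 0, ∀ q qt : ℝ × E → ℝ, IsNeumannAdjointSolution Ω η T A q qt →
      ∫ x in Ω, q (T / 4, x) ∂μ ≤
        exp (C * (1 + 1 / T + T * A + √A)) * ∫ t in Ioo 0 T, ∫ x in ω, q (t, x) ∂μ := by
  obtain ⟨c, D, M, hw⟩ := hη.exists_isCarlemanWeight hc hcrit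
  have hc0 := hw.lower_bound_pos
  have hM := hw.upper_bound_nonneg
  obtain ⟨k, hk, hparam⟩ := exists_carlemanParameter hc0 hw.laplacian_bound_nonneg hM
  refine ⟨2 * c + k * (2 + M) + 1, by positivity, fun T hT A hA q qt hq => ?_⟩
  obtain ⟨hrate, hdecay⟩ := hparam T hT A hA _ rfl
  refine (hq.setIntegral_quarter_time_le hw hΩ hc hω hωΩ hT hA
    (hk.le.trans (le_carlemanParameter hk.le hT A)) hrate hdecay).trans ?_
  gcongr
  · exact setIntegral_nonneg measurableSet_Ioo fun t ht =>
      hq.setIntegral_nonneg_of_subset hω hωΩ (Ioo_subset_Icc_self ht)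
  · exact carleman_exponent_le hc0.le hk.le hM hA hT

end Observability

theorem observability_L1_at_quarter_time
    (N : ℕ) (hN : 1 ≤ N)
    (Ω ω₀ ω : Set (EuclideanSpace ℝ (Fin N)))
    (hΩo : IsOpen Ω) (hΩb : Bornology.IsBounded Ω) (hΩc : IsConnected Ω)
    (hω₀o : IsOpen ω₀) (hω₀ne : ω₀.Nonempty) (hωo : IsOpen ω) (hωne : ω.Nonempty)
    (hω₀ω : closure ω₀ ⊆ ω) (hωΩ : ω ⊆ Ω)
    (η : EuclideanSpace ℝ (Fin N) → ℝ) (hη : ContDiff ℝ 2 η)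
    (hηpos : ∀ x ∈ Ω, 0 < η x) (hηbd : ∀ x ∈ frontier Ω, η x = 0)
    (hηgrad : ∀ x ∈ closure (Ω \ ω₀), 0 < ‖gradient η x‖) :
    ∃ C > (0:ℝ),
      ∀ T : ℝ, 0 < T →
      ∀ a : ℝ × EuclideanSpace ℝ (Fin N) → ℝ, Measurable a →
      (∃ B : ℝ, ∀ p ∈ Set.Ioo (0:ℝ) T ×ˢ Ω, |a p| ≤ B) →
      ∀ q qt : ℝ × EuclideanSpace ℝ (Fin N) → ℝ,
        ContinuousOn q (Set.Icc 0 T ×ˢ closure Ω) →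
        (∀ p ∈ Set.Icc 0 T ×ˢ closure Ω, 0 ≤ q p) →
        (∀ p ∈ Set.Ioo 0 T ×ˢ closure Ω,
          HasDerivAt (fun τ => q (τ, p.2)) (qt p) p.1) →
        ContinuousOn qt (Set.Ioo 0 T ×ˢ closure Ω) →
        (∀ p ∈ Set.Ioo 0 T ×ˢ closure Ω,
          DifferentiableAt ℝ (fun z => q (p.1, z)) p.2) →
        (∀ p ∈ Set.Ioo 0 T ×ˢ closure Ω,
          DifferentiableAt ℝ (fun y => fderiv ℝ (fun z => q (p.1, z)) y) p.2) →
        ContinuousOn (fun p : ℝ × EuclideanSpace ℝ (Fin N) =>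
          fderiv ℝ (fun z => q (p.1, z)) p.2) (Set.Ioo 0 T ×ˢ closure Ω) →
        ContinuousOn (fun p : ℝ × EuclideanSpace ℝ (Fin N) =>
          fderiv ℝ (fun y => fderiv ℝ (fun z => q (p.1, z)) y) p.2)
          (Set.Ioo 0 T ×ˢ closure Ω) →
        (∀ t ∈ Set.Ioo (0:ℝ) T, ∀ x ∈ Ω,
          -qt (t, x) - spaceLaplacian (fun z => q (t, z)) x
            + a (t, x) * q (t, x) = 0) →
        (∀ t ∈ Set.Ioo (0:ℝ) T, ∀ x ∈ frontier Ω,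
          ⟪gradient (fun z => q (t, z)) x, gradient η x⟫ = 0) →
        (∫ x in Ω, q (T/4, x))
          ≤ Real.exp (C * (1 + 1/T + T * (eLpNorm a ⊤ (volume.restrict (Set.Ioo (0:ℝ) T ×ˢ Ω))).toReal + Real.sqrt (eLpNorm a ⊤ (volume.restrict (Set.Ioo (0:ℝ) T ×ˢ Ω))).toReal)) *
            ∫ t in Set.Ioo (0:ℝ) T, ∫ x in ω, q (t, x) := by
  have hη' : IsBoundaryDefiningFunction Ω η := ⟨hη, hηpos, hηbd, fun x hx =>
    norm_pos_iff.1 (hηgrad x (frontier_subset_closure_diff hΩo (hω₀ω.trans hωΩ) hx))⟩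
  have hcrit : ∀ x ∈ closure (Ω \ ω), gradient η x ≠ 0 := fun x hx => norm_pos_iff.1 <|
    hηgrad x (closure_mono (sdiff_subset_sdiff_right (subset_closure.trans hω₀ω)) hx)
  obtain ⟨C, hC, hobs⟩ := observability_L1_at_quarter_time_general (μ := volume) hΩo
    hΩb.isCompact_closure hη' hωo.measurableSet hωΩ hcrit
  refine ⟨C, hC, fun T hT a ham ⟨B, hB⟩ q qt hq hq0 hqd hqt hdiff hdiff2 hcont hcont2 hpde hneu =>
    hobs T hT _ ENNReal.toReal_nonneg q qt ?_⟩
  have ha : MemLp a ⊤ (volume.restrict (Ioo 0 T ×ˢ Ω)) :=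
    memLp_top_of_bound ham.aestronglyMeasurable B
      ((ae_restrict_mem (isOpen_Ioo.prod hΩo).measurableSet).mono hB)
  have hfderiv : ∀ t ∈ Ioo 0 T, HasContinuousFDerivOn (fun x => q (t, x)) (closure Ω) :=
    fun t ht => ⟨fun x hx => hdiff (t, x) ⟨ht, hx⟩, continuousOn_slice hcont ht⟩
  refine .of_potential hΩo ha.eLpNorm_ne_top hq hq0 hqd hqt hfderiv hdiff2 hcont2
    (fun t ht x hx => ?_) hneu
  rw [← spaceLaplacian_eq_laplacian (hdiff2 (t, x) ⟨ht, subset_closure hx⟩), hpde t ht x hx]
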